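/- arXiv:1408.5797 — 2 statements merged into one kernel-verified Lean document; each statement's English description precedes it below -/
import Mathlib

section
/- Let F ⊆ Sym²(ℝⁿ) be an ST-invariant cone subequation with finite Riesz characteristic p, let 0 ≤ a < b ≤ ∞, and let ψ : (a, b) → ℝ be nondecreasing. Then the radial function u(x) = ψ(|x|) is F-harmonic on the annulus {x : a < |x| < b} if and only if there exist constants Θ ≥ 0 and C ∈ ℝ with ψ(t) = Θ·K_p(t) + C for all t ∈ (a, b). -/
open Set Filter Topology Matrix

noncomputable section

abbrev EucSp (n : ℕ) := EuclideanSpace ℝ (Fin n)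

/-- The rank-one orthogonal projection matrix `P_e = e eᵀ` associated to a vector `e`. -/
def projMat {n : ℕ} (e : EucSp n) : Matrix (Fin n) (Fin n) ℝ :=
  Matrix.of fun i j => e i * e j

/-- A (pure second-order, constant coefficient) subequation: a closed set of symmetric
matrices satisfying positivity `F + 𝒫 ⊆ F`. -/
def IsSubequation {n : ℕ} (F : Set (Matrix (Fin n) (Fin n) ℝ)) : Prop :=
  (∀ A ∈ F, A.IsSymm) ∧ IsClosed F ∧
    ∀ A ∈ F, ∀ P : Matrix (Fin n) (Fin n) ℝ, P.PosSemidef → A + P ∈ F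

/-- A cone subequation. -/
def IsConeSubequation {n : ℕ} (F : Set (Matrix (Fin n) (Fin n) ℝ)) : Prop :=
  IsSubequation F ∧ ∀ A ∈ F, ∀ t : ℝ, 0 ≤ t → t • A ∈ F

/-- `F` is invariant under a closed subgroup of `O(n)` acting transitively on the
unit sphere. -/
def STInvariant {n : ℕ} (F : Set (Matrix (Fin n) (Fin n) ℝ)) : Prop :=
  ∃ G : Set (Matrix (Fin n) (Fin n) ℝ),
    IsClosed G ∧
    G ⊆ (Matrix.orthogonalGroup (Fin n) ℝ : Set (Matrix (Fin n) (Fin n) ℝ)) ∧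
    (1 : Matrix (Fin n) (Fin n) ℝ) ∈ G ∧
    (∀ g ∈ G, ∀ h ∈ G, g * h ∈ G) ∧
    (∀ g ∈ G, g⁻¹ ∈ G) ∧
    (∀ x y : EucSp n, ‖x‖ = 1 → ‖y‖ = 1 → ∃ g ∈ G, Matrix.toEuclideanLin g x = y) ∧
    (∀ g ∈ G, ∀ A ∈ F, gᵀ * A * g ∈ F)

/-- The interior of `F` relative to the subspace `Sym²(ℝⁿ)` of symmetric matrices. -/
def symInterior {n : ℕ} (F : Set (Matrix (Fin n) (Fin n) ℝ)) :
    Set (Matrix (Fin n) (Fin n) ℝ) :=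
  {A | ∃ U ∈ 𝓝 A, ∀ B ∈ U, B.IsSymm → B ∈ F}

/-- The frontier of `F` relative to the subspace `Sym²(ℝⁿ)` of symmetric matrices. -/
def symFrontier {n : ℕ} (F : Set (Matrix (Fin n) (Fin n) ℝ)) :
    Set (Matrix (Fin n) (Fin n) ℝ) :=
  closure F \ symInterior F

/-- `F` has finite (increasing) Riesz characteristic `p`:
`P_{e⊥} − (p−1) P_e ∈ ∂F` for every unit vector `e`. -/
def HasRieszChar {n : ℕ} (F : Set (Matrix (Fin n) (Fin n) ℝ)) (p : ℝ) : Prop :=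
  1 ≤ p ∧ ∀ e : EucSp n, ‖e‖ = 1 →
    ((1 : Matrix (Fin n) (Fin n) ℝ) - projMat e) - (p - 1) • projMat e ∈ symFrontier F

/-- `F` has finite decreasing Riesz characteristic `q`:
`−P_{e⊥} + (q−1) P_e ∈ ∂F` for every unit vector `e`. -/
def HasDualRieszChar {n : ℕ} (F : Set (Matrix (Fin n) (Fin n) ℝ)) (q : ℝ) : Prop :=
  1 ≤ q ∧ ∀ e : EucSp n, ‖e‖ = 1 →
    -((1 : Matrix (Fin n) (Fin n) ℝ) - projMat e) + (q - 1) • projMat e ∈ symFrontier F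

/-- The Hessian matrix of a function `φ : ℝⁿ → ℝ` at `x`. -/
def hess {n : ℕ} (φ : EucSp n → ℝ) (x : EucSp n) : Matrix (Fin n) (Fin n) ℝ :=
  Matrix.of fun i j =>
    iteratedFDeriv ℝ 2 φ x ![EuclideanSpace.single i (1 : ℝ), EuclideanSpace.single j (1 : ℝ)]

/-- `u` is `F`-subharmonic (a viscosity subsolution) on `X`. -/
def IsFSubharmonicOn {n : ℕ} (F : Set (Matrix (Fin n) (Fin n) ℝ))
    (X : Set (EucSp n)) (u : EucSp n → EReal) : Prop :=
  UpperSemicontinuousOn u X ∧ (∀ x ∈ X, u x < ⊤) ∧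
    ∀ x₀ ∈ X, ∀ φ : EucSp n → ℝ, ContDiffAt ℝ 2 φ x₀ →
      (∀ᶠ x in 𝓝[X] x₀, u x ≤ ((φ x : ℝ) : EReal)) → u x₀ = ((φ x₀ : ℝ) : EReal) →
      hess φ x₀ ∈ F

/-- The dual subequation `F̃ = {A : −A ∉ Int F}` (interior relative to `Sym²(ℝⁿ)`). -/
def dualSubeq {n : ℕ} (F : Set (Matrix (Fin n) (Fin n) ℝ)) :
    Set (Matrix (Fin n) (Fin n) ℝ) :=
  {A | A.IsSymm ∧ -A ∉ symInterior F}

/-- `u` is `F`-harmonic on `X`: `u` is `F`-subharmonic and `−u` is `F̃`-subharmonic. -/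
def IsFHarmonicOn {n : ℕ} (F : Set (Matrix (Fin n) (Fin n) ℝ))
    (X : Set (EucSp n)) (u : EucSp n → ℝ) : Prop :=
  IsFSubharmonicOn F X (fun x => ((u x : ℝ) : EReal)) ∧
  IsFSubharmonicOn (dualSubeq F) X (fun x => ((-(u x) : ℝ) : EReal))

/-- The Riesz kernel `K_p`. -/
def rieszKernel (p t : ℝ) : ℝ :=
  if p < 2 then t ^ (2 - p) else if p = 2 then Real.log t else -(t ^ (2 - p))


section Cone

variable {n : ℕ} {F : Set (Matrix (Fin n) (Fin n) ℝ)}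

lemma posSemidef_near_aux (M : Matrix (Fin n) (Fin n) ℝ) (hM : M.IsSymm) (ε : ℝ)
    (h : ∀ i j, |M i j| * n ≤ ε) : (ε • (1 : Matrix (Fin n) (Fin n) ℝ) + M).PosSemidef := by
  refine Matrix.PosSemidef.of_dotProduct_mulVec_nonneg ?_ ?_
  · have : (ε • (1 : Matrix (Fin n) (Fin n) ℝ) + M).IsSymm := by
      unfold Matrix.IsSymm at *
      simp [hM]
    rw [Matrix.IsHermitian, Matrix.conjTranspose_eq_transpose_of_trivial]
    exact this
  · intro x
    have e1 : star x ⬝ᵥ ((ε • (1 : Matrix (Fin n) (Fin n) ℝ) + M) *ᵥ x)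
        = ε * ∑ i, x i ^ 2 + ∑ i, ∑ j, M i j * (x i * x j) := by
      rw [Matrix.add_mulVec, dotProduct_add, Matrix.smul_mulVec, Matrix.one_mulVec]
      congr 1
      · simp [dotProduct, Finset.mul_sum]
        exact Finset.sum_congr rfl fun i _ => by ring
      · simp only [dotProduct, Matrix.mulVec, Finset.mul_sum]
        exact Finset.sum_congr rfl fun i _ => Finset.sum_congr rfl fun j _ => by simp; ring
    rw [e1]
    rcases Nat.eq_zero_or_pos n with hn | hn
    · subst hn; simp
    have hn' : (0:ℝ) < n := by exact_mod_cast hn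
    have h2 : -(∑ i, ∑ j, M i j * (x i * x j)) ≤ ε / n * (∑ i, |x i|) ^ 2 := by
      rw [sq, Finset.sum_mul_sum, Finset.mul_sum, ← Finset.sum_neg_distrib]
      refine Finset.sum_le_sum fun i _ => ?_
      rw [Finset.mul_sum, ← Finset.sum_neg_distrib]
      refine Finset.sum_le_sum fun j _ => ?_
      calc -(M i j * (x i * x j)) ≤ |M i j * (x i * x j)| := neg_le_abs _
        _ = |M i j| * (|x i| * |x j|) := by rw [abs_mul, abs_mul]
        _ ≤ ε / n * (|x i| * |x j|) := by
          refine mul_le_mul_of_nonneg_right ?_ (by positivity)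
          rw [le_div_iff₀ hn']
          exact h i j
    have h3 : (∑ i, |x i|) ^ 2 ≤ n * ∑ i, x i ^ 2 := by
      have := sq_sum_le_card_mul_sum_sq (s := Finset.univ) (f := fun i : Fin n => |x i|)
      simpa using this
    have hε : 0 ≤ ε := le_trans (by positivity) (h ⟨0, hn⟩ ⟨0, hn⟩)
    have h4 : ε / n * (∑ i, |x i|) ^ 2 ≤ ε / n * (n * ∑ i, x i ^ 2) :=
      mul_le_mul_of_nonneg_left h3 (by positivity)
    have h5 : ε / n * (n * ∑ i, x i ^ 2) = ε * ∑ i, x i ^ 2 := by field_simp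
    linarith

lemma symInt_add_one (hF : IsConeSubequation F) {A : Matrix (Fin n) (Fin n) ℝ} (hA : A ∈ F)
    {ε : ℝ} (hε : 0 < ε) : A + ε • (1 : Matrix (Fin n) (Fin n) ℝ) ∈ symInterior F := by
  have hc : Continuous fun B : Matrix (Fin n) (Fin n) ℝ => B - (A + ε • (1 : Matrix (Fin n) (Fin n) ℝ)) := by
    fun_prop
  have hev : ∀ᶠ B in 𝓝 (A + ε • (1 : Matrix (Fin n) (Fin n) ℝ)), ∀ i j,
      |(B - (A + ε • (1 : Matrix (Fin n) (Fin n) ℝ))) i j| * n < ε := by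
    rw [eventually_all]; intro i
    rw [eventually_all]; intro j
    have hc2 : Continuous fun B : Matrix (Fin n) (Fin n) ℝ =>
        |(B - (A + ε • (1 : Matrix (Fin n) (Fin n) ℝ))) i j| * n :=
      ((hc.matrix_elem i j).abs).mul continuous_const
    refine hc2.continuousAt.eventually_lt continuousAt_const ?_
    simpa using hε
  refine ⟨_, hev, ?_⟩
  intro B hB hBs
  have hAs := hF.1.1 A hA
  have hM : (B - (A + ε • (1 : Matrix (Fin n) (Fin n) ℝ))).IsSymm := by
    unfold Matrix.IsSymm at *
    simp [hBs, hAs]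
  have := hF.1.2.2 A hA _ (posSemidef_near_aux _ hM ε fun i j => (hB i j).le)
  convert this using 1
  abel

lemma symInt_add (hF : IsConeSubequation F) {A P : Matrix (Fin n) (Fin n) ℝ}
    (hA : A ∈ symInterior F) (hP : P.PosSemidef) : A + P ∈ symInterior F := by
  obtain ⟨U, hU, h⟩ := hA
  refine ⟨(fun B => B - P) ⁻¹' U, ?_, ?_⟩
  · have hc : Continuous fun B : Matrix (Fin n) (Fin n) ℝ => B - P := by fun_prop
    apply hc.continuousAt
    simpa using hU
  · intro B hB hBs
    have hPs : P.IsSymm := by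
      have := hP.1
      rw [Matrix.IsHermitian, Matrix.conjTranspose_eq_transpose_of_trivial] at this
      exact this
    have h1 : (B - P).IsSymm := by
      unfold Matrix.IsSymm at *
      simp [hBs, hPs]
    have := hF.1.2.2 _ (h _ hB h1) P hP
    simpa using this

lemma symInt_smul (hF : IsConeSubequation F) {A : Matrix (Fin n) (Fin n) ℝ}
    (hA : A ∈ symInterior F) {t : ℝ} (ht : 0 < t) : t • A ∈ symInterior F := by
  obtain ⟨U, hU, h⟩ := hA
  refine ⟨(fun B => t⁻¹ • B) ⁻¹' U, ?_, ?_⟩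
  · have hc : Continuous fun B : Matrix (Fin n) (Fin n) ℝ => t⁻¹ • B := by fun_prop
    apply hc.continuousAt
    simpa [smul_smul, inv_mul_cancel₀ ht.ne'] using hU
  · intro B hB hBs
    have h1 : (t⁻¹ • B).IsSymm := by
      unfold Matrix.IsSymm at *
      simp [hBs]
    have := hF.2 _ (h _ hB h1) t ht.le
    simpa [smul_smul, mul_inv_cancel₀ ht.ne'] using this

lemma projMat_posSemidef (x : EucSp n) : (projMat x).PosSemidef := by
  have : projMat x = Matrix.vecMulVec x.ofLp (star x.ofLp) := by
    ext i j; simp [projMat, Matrix.vecMulVec]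
  rw [this]
  exact Matrix.posSemidef_vecMulVec_self_star _

lemma projMat_smul (c : ℝ) (x : EucSp n) : projMat (c • x) = c ^ 2 • projMat x := by
  ext i j; simp [projMat]; ring

/-- boundary matrices, positive coefficient -/
lemma bdry_pos {p : ℝ} (hF : IsConeSubequation F) (hchar : HasRieszChar F p) {x : EucSp n}
    (hx : x ≠ 0) {α β : ℝ} (hα : 0 < α) (hβ : β * ‖x‖ ^ 2 = -p * α) :
    α • (1 : Matrix (Fin n) (Fin n) ℝ) + β • projMat x ∈ F ∧
    α • (1 : Matrix (Fin n) (Fin n) ℝ) + β • projMat x ∉ symInterior F := by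
  have hx' : 0 < ‖x‖ := norm_pos_iff.mpr hx
  have h := hchar.2 (‖x‖⁻¹ • x) (by rw [norm_smul]; simp [hx'.ne'])
  set A := (1 : Matrix (Fin n) (Fin n) ℝ) - projMat (‖x‖⁻¹ • x) - (p - 1) • projMat (‖x‖⁻¹ • x)
    with hAdef
  have hβ' : β = α * (-p * (‖x‖⁻¹) ^ 2) := by field_simp; linarith
  have hA : α • (1 : Matrix (Fin n) (Fin n) ℝ) + β • projMat x = α • A := by
    rw [hAdef, projMat_smul, hβ']
    module
  rw [hA]
  have h1 : A ∈ F := by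
    have := h.1
    rwa [hF.1.2.1.closure_eq] at this
  refine ⟨hF.2 _ h1 α hα.le, fun h2 => h.2 ?_⟩
  have := symInt_smul hF h2 (inv_pos.mpr hα)
  rwa [smul_smul, inv_mul_cancel₀ hα.ne', one_smul] at this

lemma outer_notMem {p : ℝ} (hF : IsConeSubequation F) (hchar : HasRieszChar F p) {x : EucSp n}
    (hx : x ≠ 0) {α β : ℝ} (hα : 0 < α) (hβ : β * ‖x‖ ^ 2 < -p * α) :
    α • (1 : Matrix (Fin n) (Fin n) ℝ) + β • projMat x ∉ F := by
  intro h
  have hp : 0 < p := lt_of_lt_of_le one_pos hchar.1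
  have hε : 0 < -(β * ‖x‖ ^ 2) / p - α := by
    rw [sub_pos, lt_div_iff₀ hp]; linarith
  have h1 := symInt_add_one hF h hε
  have h2 := (bdry_pos hF hchar hx (α := -(β * ‖x‖ ^ 2) / p) (β := β) (by linarith)
    (by field_simp)).2
  apply h2
  convert h1 using 1
  module

lemma inner_mem {p : ℝ} (hF : IsConeSubequation F) (hchar : HasRieszChar F p) {x : EucSp n}
    (hx : x ≠ 0) {α β : ℝ} (hα : 0 < α) (hβ : -p * α < β * ‖x‖ ^ 2) :
    α • (1 : Matrix (Fin n) (Fin n) ℝ) + β • projMat x ∈ symInterior F := by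
  have hp : 0 < p := lt_of_lt_of_le one_pos hchar.1
  have hr : 0 < ‖x‖ ^ 2 := by positivity
  obtain ⟨ε, hε, hε1, hε2⟩ : ∃ ε : ℝ, 0 < ε ∧ ε < α ∧ -p * (α - ε) ≤ β * ‖x‖ ^ 2 := by
    have h0 : 0 < (β * ‖x‖ ^ 2 + p * α) / p := div_pos (by linarith) hp
    refine ⟨min (α / 2) ((β * ‖x‖ ^ 2 + p * α) / p), by positivity, ?_, ?_⟩
    · exact lt_of_le_of_lt (min_le_left _ _) (by linarith)
    · have h1 := min_le_right (α / 2) ((β * ‖x‖ ^ 2 + p * α) / p)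
      rw [le_div_iff₀ hp] at h1
      linarith
  have h1 := (bdry_pos hF hchar hx (α := α - ε) (β := -p * (α - ε) / ‖x‖ ^ 2) (by linarith)
    (by field_simp)).1
  have h2 := symInt_add_one hF h1 hε
  have hle : 0 ≤ β - -p * (α - ε) / ‖x‖ ^ 2 := by
    rw [sub_nonneg, div_le_iff₀ hr]; exact hε2
  have h3 := symInt_add hF h2 ((projMat_posSemidef x).smul hle)
  convert h3 using 1
  module

lemma bdry_mem {p : ℝ} (hF : IsConeSubequation F) (hchar : HasRieszChar F p) {x : EucSp n}
    (hx : x ≠ 0) {α β : ℝ} (hα : 0 ≤ α) (hβ : β * ‖x‖ ^ 2 = -p * α) :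
    α • (1 : Matrix (Fin n) (Fin n) ℝ) + β • projMat x ∈ F ∧
    α • (1 : Matrix (Fin n) (Fin n) ℝ) + β • projMat x ∉ symInterior F := by
  have hr : 0 < ‖x‖ ^ 2 := by positivity
  rcases hα.eq_or_lt with h | h
  · subst h
    have hb : β = 0 := by
      rcases mul_eq_zero.mp (hβ.trans (by simp)) with h | h
      · exact h
      · exact absurd h hr.ne'
    subst hb
    simp only [zero_smul, add_zero]
    have h1 := (bdry_pos hF hchar hx (α := 1) (β := -p * 1 / ‖x‖ ^ 2) one_pos (by field_simp)).1
    constructor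
    · simpa using hF.2 _ h1 0 le_rfl
    · rintro ⟨U, hU, hUF⟩
      have h2 := outer_notMem hF hchar hx (α := 1) (β := (-p - 1) / ‖x‖ ^ 2) one_pos
        (by field_simp; linarith)
      apply h2
      set B := (1:ℝ) • (1 : Matrix (Fin n) (Fin n) ℝ) + ((-p - 1) / ‖x‖ ^ 2) • projMat x with hB
      have hBs : B.IsSymm := by
        have hPs : (projMat x).IsSymm := by
          ext i j; simp [projMat, mul_comm]
        unfold Matrix.IsSymm at *
        simp [hB, hPs]
      have hc : Tendsto (fun t : ℝ => t • B) (𝓝[>] 0) (𝓝 0) := by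
        have hc : Continuous fun t : ℝ => t • B := by fun_prop
        have := hc.tendsto 0
        rw [zero_smul] at this
        exact this.mono_left nhdsWithin_le_nhds
      obtain ⟨t, htU, ht⟩ := ((hc.eventually hU).and self_mem_nhdsWithin).exists
      have ht : 0 < t := ht
      have h3 := hF.2 _ (hUF _ htU (by unfold Matrix.IsSymm at *; simp [hBs])) t⁻¹ (by positivity)
      rwa [smul_smul, inv_mul_cancel₀ ht.ne', one_smul] at h3
  · exact bdry_pos hF hchar hx h hβ

end Cone

section Calc

variable {n : ℕ}

lemma hess_apply (φ : EucSp n → ℝ) (x : EucSp n) (i j : Fin n) :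
    hess φ x i j = fderiv ℝ (fderiv ℝ φ) x (EuclideanSpace.single i (1 : ℝ))
      (EuclideanSpace.single j (1 : ℝ)) := by
  simp [hess, iteratedFDeriv_two_apply]

lemma hess_symm {φ : EucSp n → ℝ} {x : EucSp n} (h : ContDiffAt ℝ 2 φ x) : (hess φ x).IsSymm := by
  have := h.isSymmSndFDerivAt (by simp)
  ext i j
  rw [Matrix.transpose_apply, hess_apply, hess_apply]
  exact this _ _

lemma hess_quad (φ : EucSp n → ℝ) (x v : EucSp n) :
    v.ofLp ⬝ᵥ (hess φ x *ᵥ v.ofLp) = fderiv ℝ (fderiv ℝ φ) x v v := by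
  have hv : v = ∑ i, v i • EuclideanSpace.single i (1 : ℝ) := by
    ext j
    simp [Finset.sum_apply, Pi.single_apply]
  conv_rhs => rw [hv]
  simp only [map_sum, map_smul, _root_.sum_apply, _root_.smul_apply,
    dotProduct, Matrix.mulVec, hess_apply, Finset.mul_sum, smul_eq_mul]
  rw [Finset.sum_comm]
  exact Finset.sum_congr rfl fun i _ => Finset.sum_congr rfl fun j _ => by ring

lemma second_order {w : EucSp n → ℝ} {x : EucSp n} (h : ContDiffAt ℝ 2 w x)
    (hmin : IsLocalMin w x) (v : EucSp n) : 0 ≤ fderiv ℝ (fderiv ℝ w) x v v := by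
  by_contra! hneg
  set c := fderiv ℝ (fderiv ℝ w) x v v with hc
  have hline : Continuous fun t : ℝ => x + t • v := by fun_prop
  have hline' : ∀ t : ℝ, HasDerivAt (fun t : ℝ => x + t • v) v t := by
    intro t
    simpa using ((hasDerivAt_id t).smul_const v).const_add x
  have hev : ∀ᶠ y in 𝓝 x, DifferentiableAt ℝ w y := by
    filter_upwards [h.eventually (by simp)] with y hy
    exact hy.differentiableAt (by simp)
  have hd2 : DifferentiableAt ℝ (fderiv ℝ w) x :=
    (h.fderiv_right (m := 1) (by norm_num)).differentiableAt (by simp)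
  have ht0 : Tendsto (fun t : ℝ => x + t • v) (𝓝 0) (𝓝 x) := by
    have := hline.tendsto 0
    simpa using this
  let g : ℝ → ℝ := fun t => w (x + t • v) + (-c / 4) * t ^ 2
  have hg1 : ∀ᶠ t in 𝓝 (0:ℝ), HasDerivAt g (fderiv ℝ w (x + t • v) v + (-c / 2) * t) t := by
    filter_upwards [ht0.eventually hev] with t ht
    have h1 := ht.hasFDerivAt.comp_hasDerivAt t (hline' t)
    have h2 := ((hasDerivAt_pow 2 t).const_mul (-c / 4))
    refine (h1.add h2).congr_deriv ?_
    simp; ring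
  have hg1' : deriv g =ᶠ[𝓝 0] fun t => fderiv ℝ w (x + t • v) v + (-c / 2) * t := by
    filter_upwards [hg1] with t ht using ht.deriv
  have hg2 : HasDerivAt (fun t => fderiv ℝ w (x + t • v) v + (-c / 2) * t) (c / 2) 0 := by
    have hd2' : HasFDerivAt (fderiv ℝ w) (fderiv ℝ (fderiv ℝ w) x) (x + (0:ℝ) • v) := by
      simpa using hd2.hasFDerivAt
    have h1 := hd2'.comp_hasDerivAt (0:ℝ) (hline' 0)
    have h2 := h1.clm_apply (hasDerivAt_const (0:ℝ) v)
    have h3 := ((hasDerivAt_id (0:ℝ)).const_mul (-c / 2))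
    refine (h2.add h3).congr_deriv ?_
    simp [← hc]; ring
  have hd0 : deriv g 0 = 0 := by
    rw [hg1'.eq_of_nhds]
    simp [hmin.fderiv_eq_zero]
  have hmax : IsLocalMax g 0 := by
    apply isLocalMax_of_deriv_deriv_neg _ hd0
    · exact hg1.self_of_nhds.continuousAt
    · rw [hg1'.deriv_eq, hg2.deriv]; linarith
  have hmin' : ∀ᶠ t in 𝓝 (0:ℝ), w x ≤ w (x + t • v) := ht0.eventually hmin
  have hall : ∀ᶠ t in 𝓝[>] (0:ℝ), False := by
    filter_upwards [nhdsWithin_le_nhds hmax, nhdsWithin_le_nhds hmin', self_mem_nhdsWithin]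
      with t h1 h2 h3
    have h3 : 0 < t := h3
    have h4 : g t ≤ g 0 := h1
    simp only [g] at h4
    simp at h4
    have : 0 < -c / 4 * t ^ 2 := by
      have : 0 < -c / 4 := by linarith
      positivity
    linarith
  exact hall.exists.elim fun _ h => h

lemma hess_sub_posSemidef {φ w : EucSp n → ℝ} {x : EucSp n} (hφ : ContDiffAt ℝ 2 φ x)
    (hw : ContDiffAt ℝ 2 w x) (hle : ∀ᶠ y in 𝓝 x, w y ≤ φ y) (heq : w x = φ x) :
    (hess φ x - hess w x).PosSemidef := by
  have hs1 := hess_symm hφ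
  have hs2 := hess_symm hw
  refine Matrix.PosSemidef.of_dotProduct_mulVec_nonneg ?_ ?_
  · rw [Matrix.IsHermitian, Matrix.conjTranspose_eq_transpose_of_trivial]
    unfold Matrix.IsSymm at *
    rw [Matrix.transpose_sub, hs1, hs2]
  · intro v
    have hmin : IsLocalMin (fun y => φ y - w y) x := by
      filter_upwards [hle] with y hy
      linarith
    have h := second_order (hφ.sub hw) hmin (WithLp.toLp 2 v)
    have hev1 : ∀ᶠ y in 𝓝 x, DifferentiableAt ℝ φ y := by
      filter_upwards [hφ.eventually (by simp)] with y hy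
      exact hy.differentiableAt (by simp)
    have hev2 : ∀ᶠ y in 𝓝 x, DifferentiableAt ℝ w y := by
      filter_upwards [hw.eventually (by simp)] with y hy
      exact hy.differentiableAt (by simp)
    have hd1 : DifferentiableAt ℝ (fderiv ℝ φ) x :=
      (hφ.fderiv_right (m := 1) (by norm_num)).differentiableAt (by simp)
    have hd2 : DifferentiableAt ℝ (fderiv ℝ w) x :=
      (hw.fderiv_right (m := 1) (by norm_num)).differentiableAt (by simp)
    have he : fderiv ℝ (fun y => φ y - w y) =ᶠ[𝓝 x] fun y => fderiv ℝ φ y - fderiv ℝ w y := by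
      filter_upwards [hev1, hev2] with y h1 h2 using fderiv_fun_sub h1 h2
    rw [he.fderiv_eq, fderiv_fun_sub hd1 hd2] at h
    have q1 := hess_quad φ x (WithLp.toLp 2 v)
    have q2 := hess_quad w x (WithLp.toLp 2 v)
    rw [Matrix.sub_mulVec, dotProduct_sub]
    simp only [_root_.sub_apply] at h
    simp only [star_trivial]
    rw [← q1, ← q2] at h
    exact h

lemma hess_radial {H H1 : ℝ → ℝ} {H2 : ℝ} {x : EucSp n}
    (h1 : ∀ᶠ r in 𝓝 (‖x‖ ^ 2), HasDerivAt H (H1 r) r) (h2 : HasDerivAt H1 H2 (‖x‖ ^ 2)) :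
    hess (fun y => H (‖y‖ ^ 2)) x
      = (2 * H1 (‖x‖ ^ 2)) • (1 : Matrix (Fin n) (Fin n) ℝ) + (4 * H2) • projMat x := by
  have hsq : ∀ y : EucSp n, HasFDerivAt (fun y : EucSp n => ‖y‖ ^ 2)
      (2 • (innerSL ℝ) y) y := by
    intro y
    have := (hasFDerivAt_id (𝕜 := ℝ) y).norm_sq
    simpa using this
  have hcont : Tendsto (fun y : EucSp n => ‖y‖ ^ 2) (𝓝 x) (𝓝 (‖x‖ ^ 2)) :=
    (hsq x).continuousAt
  have he : fderiv ℝ (fun y : EucSp n => H (‖y‖ ^ 2)) =ᶠ[𝓝 x]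
      ((fun y : EucSp n => 2 * H1 (‖y‖ ^ 2)) • (fun y : EucSp n => innerSL ℝ y)) := by
    filter_upwards [hcont.eventually h1] with y hy
    have := (hy.comp_hasFDerivAt y (hsq y)).fderiv
    simp only [Function.comp_def] at this
    rw [this]
    ext v
    simp
    ring
  have hi : HasFDerivAt (fun y : EucSp n => innerSL ℝ y) (innerSL ℝ) x :=
    (innerSL (E := EucSp n) ℝ).hasFDerivAt
  have hc : HasFDerivAt (fun y : EucSp n => 2 * H1 (‖y‖ ^ 2)) ((2:ℝ) • H2 • (2 • (innerSL ℝ) x)) x := by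
    exact (h2.comp_hasFDerivAt x (hsq x)).const_mul 2
  have := (hc.smul hi).fderiv
  ext i j
  rw [hess_apply, he.fderiv_eq, this]
  have s1 : ∀ i : Fin n, inner ℝ x (EuclideanSpace.single i (1:ℝ)) = x i := by
    intro i; simp [EuclideanSpace.inner_single_right]
  have s2 : (innerSL ℝ (EuclideanSpace.single i (1:ℝ))) (EuclideanSpace.single j (1:ℝ))
      = (1 : Matrix (Fin n) (Fin n) ℝ) i j := by
    rw [innerSL_apply_apply, EuclideanSpace.inner_single_left]
    simp [Matrix.one_apply]
  simp [projMat, s1, s2]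
  ring

end Calc

section Kernel

/-- The Riesz kernel as a function of `r = t²`. -/
def kk (p r : ℝ) : ℝ :=
  if p < 2 then r ^ ((2 - p) / 2) else if p = 2 then Real.log r / 2 else -(r ^ ((2 - p) / 2))

/-- The constant in the derivative of `kk`. -/
def kc (p : ℝ) : ℝ := if p < 2 then (2 - p) / 2 else if p = 2 then 1 / 2 else (p - 2) / 2

lemma kc_pos (p : ℝ) : 0 < kc p := by
  unfold kc
  split_ifs with h1 h2
  · linarith
  · norm_num
  · have : 2 < p := lt_of_le_of_ne (not_lt.mp h1) (Ne.symm h2)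
    linarith

lemma rieszKernel_eq (p : ℝ) {t : ℝ} (ht : 0 < t) : rieszKernel p t = kk p (t ^ 2) := by
  have h : t ^ (2 - p) = (t ^ 2) ^ ((2 - p) / 2) := by
    rw [← Real.rpow_natCast t 2, ← Real.rpow_mul ht.le]
    congr 1
    push_cast
    ring
  unfold rieszKernel kk
  split_ifs with h1 h2
  · exact h
  · rw [Real.log_pow]; push_cast; ring
  · rw [h]

lemma kk_hasDerivAt (p : ℝ) {r : ℝ} (hr : 0 < r) :
    HasDerivAt (kk p) (kc p * r ^ (-p / 2)) r := by
  have h := Real.hasDerivAt_rpow_const (x := r) (p := (2 - p) / 2) (Or.inl hr.ne')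
  have e : (2 - p) / 2 - 1 = -p / 2 := by ring
  rw [e] at h
  unfold kc
  split_ifs with h1 h2
  · have : kk p = fun r => r ^ ((2 - p) / 2) := by funext r; simp [kk, h1]
    rw [this]; exact h
  · have : kk p = fun r => Real.log r / 2 := by funext r; simp [kk, h2]
    rw [this]
    refine ((Real.hasDerivAt_log hr.ne').div_const 2).congr_deriv ?_
    rw [h2, show (-2 / 2 : ℝ) = -1 by norm_num, Real.rpow_neg_one]
    ring
  · have : kk p = fun r => -(r ^ ((2 - p) / 2)) := by funext r; simp [kk, h1, h2]
    rw [this]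
    refine h.neg.congr_deriv ?_
    ring

lemma kk_hasDerivAt2 (p : ℝ) {r : ℝ} (hr : 0 < r) :
    HasDerivAt (fun r : ℝ => kc p * r ^ (-p / 2)) (-(p / (2 * r)) * (kc p * r ^ (-p / 2))) r := by
  have h := (Real.hasDerivAt_rpow_const (x := r) (p := -p / 2) (Or.inl hr.ne')).const_mul (kc p)
  refine h.congr_deriv ?_
  rw [Real.rpow_sub_one hr.ne']
  field_simp

lemma kk_contDiffAt (p : ℝ) {r : ℝ} (hr : 0 < r) : ContDiffAt ℝ 2 (kk p) r := by
  have h := Real.contDiffAt_rpow_const_of_ne (x := r) (p := (2 - p) / 2) (n := 2) hr.ne'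
  rcases lt_trichotomy p 2 with h1 | h1 | h1
  · have : kk p = fun r => r ^ ((2 - p) / 2) := by funext r; simp [kk, h1]
    rw [this]; exact h
  · have : kk p = fun r => Real.log r / 2 := by funext r; simp [kk, h1]
    rw [this]
    exact (Real.contDiffAt_log.mpr hr.ne').div_const 2
  · have : kk p = fun r => -(r ^ ((2 - p) / 2)) := by
      funext r; simp [kk, h1.ne', not_lt.mpr h1.le]
    rw [this]
    exact h.neg

lemma rieszKernel_strictMono (p : ℝ) : StrictMonoOn (rieszKernel p) (Ioi 0) := by
  have h : StrictMonoOn (kk p) (Ioi 0) := by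
    apply strictMonoOn_of_deriv_pos (convex_Ioi 0)
    · intro r hr
      exact (kk_hasDerivAt p hr).continuousAt.continuousWithinAt
    · intro r hr
      rw [interior_Ioi] at hr
      rw [(kk_hasDerivAt p hr).deriv]
      exact mul_pos (kc_pos p) (Real.rpow_pos_of_pos hr _)
  intro s hs t ht hst
  have hs : 0 < s := hs
  have ht : 0 < t := ht
  rw [rieszKernel_eq p hs, rieszKernel_eq p ht]
  exact h (show 0 < s ^ 2 by positivity) (show 0 < t ^ 2 by positivity) (by nlinarith)

/-- Quadratic polynomial in the kernel. -/
def quadK (p A σ γ k1 k2 r : ℝ) : ℝ :=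
  A + σ * (kk p r - k1) + γ * ((kk p r - k1) * (kk p r - k2))

lemma quadK_contDiffAt (p A σ γ k1 k2 : ℝ) {r : ℝ} (hr : 0 < r) :
    ContDiffAt ℝ 2 (quadK p A σ γ k1 k2) r := by
  have h := kk_contDiffAt p hr
  unfold quadK
  fun_prop

variable {n : ℕ}

lemma quadK_contDiffAt' (p A σ γ k1 k2 : ℝ) {x : EucSp n} (hx : x ≠ 0) :
    ContDiffAt ℝ 2 (fun y : EucSp n => quadK p A σ γ k1 k2 (‖y‖ ^ 2)) x := by
  have hr : 0 < ‖x‖ ^ 2 := by positivity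
  exact (quadK_contDiffAt p A σ γ k1 k2 hr).comp x (contDiff_norm_sq ℝ).contDiffAt

lemma hess_quadK (p A σ γ k1 k2 : ℝ) {x : EucSp n} (hx : x ≠ 0) :
    ∃ κ κ' β : ℝ, 0 < κ ∧ 0 < κ' ∧
      hess (fun y : EucSp n => quadK p A σ γ k1 k2 (‖y‖ ^ 2)) x
        = ((σ + γ * (2 * kk p (‖x‖ ^ 2) - k1 - k2)) * κ) • (1 : Matrix (Fin n) (Fin n) ℝ)
          + β • projMat x ∧
      β * ‖x‖ ^ 2 = -p * ((σ + γ * (2 * kk p (‖x‖ ^ 2) - k1 - k2)) * κ) + γ * κ' := by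
  have hr : 0 < ‖x‖ ^ 2 := by positivity
  set r := ‖x‖ ^ 2 with hrdef
  have hd : ∀ s : ℝ, 0 < s → HasDerivAt (quadK p A σ γ k1 k2)
      ((σ + γ * (2 * kk p s - k1 - k2)) * (kc p * s ^ (-p / 2))) s := by
    intro s hs
    have hk := kk_hasDerivAt p hs
    have := ((hasDerivAt_const s A).add ((hk.sub_const k1).const_mul σ)).add
      (((hk.sub_const k1).mul (hk.sub_const k2)).const_mul γ)
    refine this.congr_deriv ?_
    ring
  have hk := kk_hasDerivAt p hr
  have hk2 := kk_hasDerivAt2 p hr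
  have hd2 : HasDerivAt (fun s => (σ + γ * (2 * kk p s - k1 - k2)) * (kc p * s ^ (-p / 2)))
      (2 * γ * (kc p * r ^ (-p / 2)) ^ 2 + (σ + γ * (2 * kk p r - k1 - k2)) *
        (-(p / (2 * r)) * (kc p * r ^ (-p / 2)))) r := by
    have := (((((hk.const_mul 2).sub_const k1).sub_const k2).const_mul γ).const_add σ).mul hk2
    refine this.congr_deriv ?_
    ring
  have hev : ∀ᶠ s in 𝓝 (‖x‖ ^ 2), HasDerivAt (quadK p A σ γ k1 k2)
      ((σ + γ * (2 * kk p s - k1 - k2)) * (kc p * s ^ (-p / 2))) s := by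
    filter_upwards [lt_mem_nhds hr] with s hs using hd s hs
  have hκ : 0 < kc p * r ^ (-p / 2) := mul_pos (kc_pos p) (Real.rpow_pos_of_pos hr _)
  refine ⟨2 * (kc p * r ^ (-p / 2)), 8 * (kc p * r ^ (-p / 2)) ^ 2 * r,
    4 * (2 * γ * (kc p * r ^ (-p / 2)) ^ 2 + (σ + γ * (2 * kk p r - k1 - k2)) *
        (-(p / (2 * r)) * (kc p * r ^ (-p / 2)))), by positivity,
    by positivity, ?_, ?_⟩
  · rw [hess_radial hev hd2, ← hrdef]
    congr 2
    ring
  · field_simp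
    ring

end Kernel

section Main

variable {n : ℕ}

/-- The annulus. -/
def ann (n : ℕ) (a : ℝ) (b : EReal) : Set (EucSp n) :=
  {x : EucSp n | a < ‖x‖ ∧ ((‖x‖ : ℝ) : EReal) < b}

lemma isOpen_ann (a : ℝ) (b : EReal) : IsOpen (ann n a b) := by
  apply IsOpen.inter
  · exact isOpen_lt continuous_const continuous_norm
  · exact isOpen_lt (continuous_coe_real_ereal.comp continuous_norm) continuous_const

lemma compare (hn : 1 ≤ n) {S : Set (Matrix (Fin n) (Fin n) ℝ)} {a : ℝ} {b : EReal} (ha : 0 ≤ a)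
    {f : ℝ → ℝ} (hs : IsFSubharmonicOn S (ann n a b) (fun x => ((f ‖x‖ : ℝ) : EReal)))
    {t1 t2 : ℝ} (h1 : a < t1) (h2 : (t2 : EReal) < b)
    {p A σ γ k1 k2 : ℝ}
    (hH : ∀ (A' : ℝ) (x : EucSp n), t1 < ‖x‖ → ‖x‖ < t2 →
      hess (fun y : EucSp n => quadK p A' σ γ k1 k2 (‖y‖ ^ 2)) x ∉ S)
    (hb1 : f t1 ≤ quadK p A σ γ k1 k2 (t1 ^ 2)) (hb2 : f t2 ≤ quadK p A σ γ k1 k2 (t2 ^ 2))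
    {m : ℝ} (hm1 : t1 ≤ m) (hm2 : m ≤ t2) : f m ≤ quadK p A σ γ k1 k2 (m ^ 2) := by
  by_contra! hcon
  let T : Set (EucSp n) := {x | t1 ≤ ‖x‖ ∧ ‖x‖ ≤ t2}
  have hTX : T ⊆ ann n a b := fun x hx =>
    ⟨lt_of_lt_of_le h1 hx.1, lt_of_le_of_lt (EReal.coe_le_coe_iff.mpr hx.2) h2⟩
  have hT0 : ∀ x ∈ T, x ≠ 0 := by
    intro x hx h0
    have := hx.1
    rw [h0, norm_zero] at this
    linarith
  have hTc : IsCompact T := by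
    refine Metric.isCompact_of_isClosed_isBounded ?_ ?_
    · exact (isClosed_le continuous_const continuous_norm).inter
        (isClosed_le continuous_norm continuous_const)
    · refine (Metric.isBounded_closedBall (x := (0 : EucSp n)) (r := t2)).subset ?_
      intro x hx
      simpa using hx.2
  have hm0 : 0 < m := by linarith
  let xm : EucSp n := EuclideanSpace.single ⟨0, hn⟩ m
  have hxm : ‖xm‖ = m := by simp [xm, abs_of_pos hm0]
  have hxmT : xm ∈ T := by simp only [T, mem_ofPred_eq, hxm]; exact ⟨hm1, hm2⟩
  have husc : UpperSemicontinuousOn (fun x : EucSp n => f ‖x‖) T := by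
    intro x hx y hy
    have := (hs.1 x (hTX hx)) (y : EReal) (EReal.coe_lt_coe_iff.mpr hy)
    have := nhdsWithin_mono x hTX this
    filter_upwards [this] with z hz
    exact EReal.coe_lt_coe_iff.mp hz
  have hcont : ContinuousOn (fun x : EucSp n => -quadK p A σ γ k1 k2 (‖x‖ ^ 2)) T := by
    intro x hx
    exact (quadK_contDiffAt' p A σ γ k1 k2 (hT0 x hx)).continuousAt.neg.continuousWithinAt
  obtain ⟨x0, hx0, hmax⟩ := UpperSemicontinuousOn.exists_isMaxOn ⟨xm, hxmT⟩ hTc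
    (husc.add hcont.upperSemicontinuousOn)
  have hpos : 0 < f ‖x0‖ - quadK p A σ γ k1 k2 (‖x0‖ ^ 2) := by
    have := hmax hxmT
    simp only [mem_ofPred_eq, hxm] at this
    linarith
  have hlt1 : t1 < ‖x0‖ := by
    refine lt_of_le_of_ne hx0.1 fun h => ?_
    rw [← h] at hpos; linarith
  have hlt2 : ‖x0‖ < t2 := by
    refine lt_of_le_of_ne hx0.2 fun h => ?_
    rw [h] at hpos; linarith
  have hTn : T ∈ 𝓝 x0 := by
    filter_upwards [continuous_norm.continuousAt.eventually (lt_mem_nhds hlt1),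
      continuous_norm.continuousAt.eventually (gt_mem_nhds hlt2)] with z hz1 hz2
    exact ⟨hz1.le, hz2.le⟩
  refine hH (A + (f ‖x0‖ - quadK p A σ γ k1 k2 (‖x0‖ ^ 2))) x0 hlt1 hlt2 ?_
  refine hs.2.2 x0 (hTX hx0) _ (quadK_contDiffAt' _ _ _ _ _ _ (hT0 x0 hx0)) ?_ ?_
  · filter_upwards [nhdsWithin_le_nhds hTn] with z hz
    rw [EReal.coe_le_coe_iff]
    have := hmax hz
    simp only [mem_ofPred_eq] at this
    simp only [quadK] at this ⊢
    linarith
  · rw [EReal.coe_eq_coe_iff]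
    simp only [quadK]
    ring

lemma chord_eq (hn : 1 ≤ n) {p : ℝ} {F : Set (Matrix (Fin n) (Fin n) ℝ)}
    (hF : IsConeSubequation F) (hchar : HasRieszChar F p)
    {a : ℝ} {b : EReal} (ha : 0 ≤ a) {ψ : ℝ → ℝ}
    (h : IsFHarmonicOn F (ann n a b) (fun x => ψ ‖x‖))
    {t1 m t2 : ℝ} (h1 : a < t1) (h2 : (t2 : EReal) < b) (hm1 : t1 < m) (hm2 : m < t2)
    (hψ1 : ψ t1 ≤ ψ m) (hψ2 : ψ m ≤ ψ t2) :
    (ψ m - ψ t1) * (rieszKernel p t2 - rieszKernel p t1) =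
      (ψ t2 - ψ t1) * (rieszKernel p m - rieszKernel p t1) := by
  have ht1 : 0 < t1 := by linarith
  have hm0 : 0 < m := by linarith
  have ht2 : 0 < t2 := by linarith
  have hmono := rieszKernel_strictMono p
  have hk1 := hmono (show t1 ∈ Ioi 0 from ht1) (show m ∈ Ioi 0 from hm0) hm1
  have hk2 := hmono (show m ∈ Ioi 0 from hm0) (show t2 ∈ Ioi 0 from ht2) hm2
  rcases (hψ1.trans hψ2).eq_or_lt with he | hlt
  · have : ψ m = ψ t1 := le_antisymm (by linarith) hψ1
    rw [this, he]; ring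
  set k1 := rieszKernel p t1 with hk1d
  set k2 := rieszKernel p t2 with hk2d
  set km := rieszKernel p m with hkmd
  set σ := (ψ t2 - ψ t1) / (k2 - k1) with hσd
  have hk12 : 0 < k2 - k1 := by linarith
  have hσ : 0 < σ := div_pos (by linarith) hk12
  have hσ' : σ * (k2 - k1) = ψ t2 - ψ t1 := by rw [hσd]; field_simp
  -- slope positivity
  have hslope : ∀ γ : ℝ, |γ| * (k2 - k1) < σ → ∀ x : EucSp n, t1 < ‖x‖ → ‖x‖ < t2 →
      0 < σ + γ * (2 * kk p (‖x‖ ^ 2) - k1 - k2) := by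
    intro γ hγ x hx1 hx2
    have hx0 : 0 < ‖x‖ := by linarith
    have e1 := hmono (show t1 ∈ Ioi 0 from ht1) (show ‖x‖ ∈ Ioi 0 from hx0) hx1
    have e2 := hmono (show ‖x‖ ∈ Ioi 0 from hx0) (show t2 ∈ Ioi 0 from ht2) hx2
    rw [← rieszKernel_eq p hx0]
    have e3 : |2 * rieszKernel p ‖x‖ - k1 - k2| ≤ k2 - k1 := by
      rw [abs_le]; constructor <;> linarith
    have e4 := neg_abs_le (γ * (2 * rieszKernel p ‖x‖ - k1 - k2))
    rw [abs_mul] at e4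
    have e5 := mul_le_mul_of_nonneg_left e3 (abs_nonneg γ)
    linarith
  have hq1 : ∀ A σ γ : ℝ, quadK p A σ γ k1 k2 (t1 ^ 2) = A := by
    intro A σ γ
    simp [quadK, ← rieszKernel_eq p ht1, ← hk1d]
  have hq2 : ∀ A σ γ : ℝ, quadK p A σ γ k1 k2 (t2 ^ 2) = A + σ * (k2 - k1) := by
    intro A σ γ
    simp [quadK, ← rieszKernel_eq p ht2, ← hk2d]
  have hqm : ∀ A σ γ : ℝ, quadK p A σ γ k1 k2 (m ^ 2) =
      A + σ * (km - k1) + γ * ((km - k1) * (km - k2)) := by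
    intro A σ γ
    simp [quadK, ← rieszKernel_eq p hm0, ← hkmd]
  have hup : ∀ ε : ℝ, 0 < ε → ε * (k2 - k1) < σ →
      ψ m ≤ ψ t1 + σ * (km - k1) + ε * ((km - k1) * (k2 - km)) := by
    intro ε hε hεs
    have := compare hn ha h.1 h1 h2 (p := p) (A := ψ t1) (σ := σ) (γ := -ε) (k1 := k1) (k2 := k2)
      ?_ (hq1 _ _ _).ge ((hq2 _ _ _).trans (by linarith)).ge hm1.le hm2.le
    · rw [hqm] at this
      linarith
    · intro A' x hx1 hx2
      have hx : x ≠ 0 := by rintro rfl; rw [norm_zero] at hx1; linarith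
      have hs := hslope (-ε) (by rwa [abs_neg, abs_of_pos hε]) x hx1 hx2
      obtain ⟨κ, κ', β, hκ, hκ', e, eβ⟩ := hess_quadK p A' σ (-ε) k1 k2 hx
      rw [e]
      refine outer_notMem hF hchar hx (mul_pos hs hκ) ?_
      rw [eβ]
      have := mul_pos hε hκ'
      linarith
  have hdown : ∀ ε : ℝ, 0 < ε → ε * (k2 - k1) < σ →
      ψ t1 + σ * (km - k1) - ε * ((km - k1) * (k2 - km)) ≤ ψ m := by
    intro ε hε hεs
    have := compare (f := fun t => -ψ t) hn ha h.2 h1 h2 (p := p) (A := -ψ t1) (σ := -σ) (γ := -ε)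
      (k1 := k1) (k2 := k2)
      ?_ (hq1 _ _ _).ge ((hq2 _ _ _).trans (by linarith)).ge hm1.le hm2.le
    · rw [hqm] at this
      linarith
    · intro A' x hx1 hx2 hmem
      have hx : x ≠ 0 := by rintro rfl; rw [norm_zero] at hx1; linarith
      have hs := hslope ε (by rwa [abs_of_pos hε]) x hx1 hx2
      obtain ⟨κ, κ', β, hκ, hκ', e, eβ⟩ := hess_quadK p A' (-σ) (-ε) k1 k2 hx
      rw [e] at hmem
      refine hmem.2 ?_
      have := inner_mem hF hchar hx (α := (σ + ε * (2 * kk p (‖x‖ ^ 2) - k1 - k2)) * κ) (β := -β)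
        (mul_pos hs hκ) (by have := mul_pos hε hκ'; linarith)
      convert this using 1
      module
  have hlim : ∀ᶠ ε in 𝓝[>] (0:ℝ), 0 < ε ∧ ε * (k2 - k1) < σ := by
    have hc : Continuous fun ε : ℝ => ε * (k2 - k1) := by fun_prop
    have := hc.continuousAt.eventually (gt_mem_nhds (show 0 * (k2 - k1) < σ by simpa using hσ))
    filter_upwards [self_mem_nhdsWithin, nhdsWithin_le_nhds this] with ε e1 e2 using ⟨e1, e2⟩
  have hA : ψ m ≤ ψ t1 + σ * (km - k1) := by
    have hc : Continuous fun ε : ℝ => ψ t1 + σ * (km - k1) + ε * ((km - k1) * (k2 - km)) := by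
      fun_prop
    have ht := (hc.tendsto 0).mono_left (nhdsWithin_le_nhds (s := Ioi 0))
    simp only [zero_mul, add_zero] at ht
    refine ge_of_tendsto ht ?_
    filter_upwards [hlim] with ε hε using hup ε hε.1 hε.2
  have hB : ψ t1 + σ * (km - k1) ≤ ψ m := by
    have hc : Continuous fun ε : ℝ => ψ t1 + σ * (km - k1) - ε * ((km - k1) * (k2 - km)) := by
      fun_prop
    have ht := (hc.tendsto 0).mono_left (nhdsWithin_le_nhds (s := Ioi 0))
    simp only [zero_mul, sub_zero] at ht
    refine le_of_tendsto ht ?_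
    filter_upwards [hlim] with ε hε using hdown ε hε.1 hε.2
  have hE : ψ m - ψ t1 = σ * (km - k1) := by linarith
  rw [hE, ← hσ']
  ring

lemma quad_harm {p : ℝ} {F : Set (Matrix (Fin n) (Fin n) ℝ)}
    (hF : IsConeSubequation F) (hchar : HasRieszChar F p)
    {a : ℝ} {b : EReal} (ha : 0 ≤ a) {ψ : ℝ → ℝ} {Θ C : ℝ} (hΘ : 0 ≤ Θ)
    (h : ∀ t : ℝ, a < t → ((t : ℝ) : EReal) < b → ψ t = Θ * rieszKernel p t + C) :
    IsFHarmonicOn F (ann n a b) (fun x => ψ ‖x‖) := by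
  have hne : ∀ x ∈ ann n a b, x ≠ 0 := by
    rintro x hx rfl
    have := hx.1
    rw [norm_zero] at this; linarith
  have hu : ∀ x ∈ ann n a b, ψ ‖x‖ = quadK p C Θ 0 0 0 (‖x‖ ^ 2) := by
    intro x hx
    have := norm_pos_iff.mpr (hne x hx)
    rw [h _ hx.1 hx.2, rieszKernel_eq p this, quadK]; ring
  have hu' : ∀ x ∈ ann n a b, -ψ ‖x‖ = quadK p (-C) (-Θ) 0 0 0 (‖x‖ ^ 2) := by
    intro x hx
    rw [hu x hx, quadK, quadK]; ring
  have hcont : ∀ A σ : ℝ, ContinuousOn (fun x : EucSp n => quadK p A σ 0 0 0 (‖x‖ ^ 2))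
      (ann n a b) := fun A σ x hx =>
    (quadK_contDiffAt' p A σ 0 0 0 (hne x hx)).continuousAt.continuousWithinAt
  have hpsd : ∀ (A σ : ℝ) (w : EucSp n → ℝ)
      (_ : ∀ x ∈ ann n a b, w x = quadK p A σ 0 0 0 (‖x‖ ^ 2)) (x₀ : EucSp n) (_ : x₀ ∈ ann n a b)
      (φ : EucSp n → ℝ) (_ : ContDiffAt ℝ 2 φ x₀)
      (_ : ∀ᶠ x in 𝓝[ann n a b] x₀, ((w x : ℝ) : EReal) ≤ ((φ x : ℝ) : EReal))
      (_ : ((w x₀ : ℝ) : EReal) = ((φ x₀ : ℝ) : EReal)),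
      (hess φ x₀ - hess (fun y : EucSp n => quadK p A σ 0 0 0 (‖y‖ ^ 2)) x₀).PosSemidef := by
    intro A σ w hw x₀ hx₀ φ hφ hle heq
    refine hess_sub_posSemidef hφ (quadK_contDiffAt' p A σ 0 0 0 (hne x₀ hx₀)) ?_ ?_
    · have hX := (isOpen_ann a b).mem_nhds hx₀
      rw [nhdsWithin_eq_nhds.mpr hX] at hle
      filter_upwards [hle, hX] with y hy hyX
      rw [← hw y hyX]
      exact EReal.coe_le_coe_iff.mp hy
    · rw [← hw x₀ hx₀]
      exact EReal.coe_eq_coe_iff.mp heq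
  refine ⟨⟨?_, fun x _ => EReal.coe_lt_top _, ?_⟩, ⟨?_, fun x _ => EReal.coe_lt_top _, ?_⟩⟩
  · apply ContinuousOn.upperSemicontinuousOn
    exact continuous_coe_real_ereal.comp_continuousOn ((hcont C Θ).congr hu)
  · intro x₀ hx₀ φ hφ hle heq
    have hP := hpsd C Θ _ hu x₀ hx₀ φ hφ hle heq
    obtain ⟨κ, κ', β, hκ, hκ', e, eβ⟩ := hess_quadK p C Θ 0 0 0 (hne x₀ hx₀)
    have hm := (bdry_mem hF hchar (hne x₀ hx₀) (α := Θ * κ) (β := β) (by positivity)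
      (by rw [eβ]; ring)).1
    have := hF.1.2.2 _ hm _ hP
    rw [e] at this
    simpa using this
  · apply ContinuousOn.upperSemicontinuousOn
    exact continuous_coe_real_ereal.comp_continuousOn ((hcont (-C) (-Θ)).congr hu')
  · intro x₀ hx₀ φ hφ hle heq
    have hP := hpsd (-C) (-Θ) _ hu' x₀ hx₀ φ hφ hle heq
    obtain ⟨κ, κ', β, hκ, hκ', e, eβ⟩ := hess_quadK p (-C) (-Θ) 0 0 0 (hne x₀ hx₀)
    refine ⟨hess_symm hφ, fun hint => ?_⟩
    have hm := (bdry_mem hF hchar (hne x₀ hx₀) (α := Θ * κ) (β := -β) (by positivity)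
      (by rw [neg_mul, eβ]; ring)).2
    apply hm
    have := symInt_add hF hint hP
    rw [e] at this
    convert this using 1
    module

end Main

/-- Increasing radial `F`-harmonics on an annulus are exactly `Θ·K_p(|x|) + C`
with `Θ ≥ 0`. -/
theorem stmt3 (n : ℕ) (hn : 1 ≤ n) (p : ℝ)
    (F : Set (Matrix (Fin n) (Fin n) ℝ))
    (hF : IsConeSubequation F) (hST : STInvariant F) (hchar : HasRieszChar F p)
    (a : ℝ) (b : EReal) (ha : 0 ≤ a) (hab : (a : EReal) < b)
    (ψ : ℝ → ℝ) (hψ : MonotoneOn ψ {t : ℝ | a < t ∧ (t : EReal) < b}) :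
    IsFHarmonicOn F {x : EucSp n | a < ‖x‖ ∧ ((‖x‖ : ℝ) : EReal) < b}
        (fun x => ψ ‖x‖) ↔
      ∃ Θ C : ℝ, 0 ≤ Θ ∧ ∀ t : ℝ, a < t → ((t : ℝ) : EReal) < b →
        ψ t = Θ * rieszKernel p t + C := by
  change IsFHarmonicOn F (ann n a b) (fun x => ψ ‖x‖) ↔ _
  constructor
  · intro h
    -- pick two points of the interval
    obtain ⟨t2, ht2a, ht2b⟩ := EReal.lt_iff_exists_real_btwn.mp hab
    have ht2a : a < t2 := EReal.coe_lt_coe_iff.mp ht2a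
    obtain ⟨t1, ht1a, ht12⟩ := exists_between ht2a
    have hI : ∀ s t : ℝ, s ≤ t → (t : EReal) < b → (s : EReal) < b := fun s t hst ht =>
      lt_of_le_of_lt (EReal.coe_le_coe_iff.mpr hst) ht
    have hψ' : ∀ s t : ℝ, a < s → s ≤ t → (t : EReal) < b → ψ s ≤ ψ t := fun s t hs hst ht =>
      hψ ⟨hs, hI s t hst ht⟩ ⟨lt_of_lt_of_le hs hst, ht⟩ hst
    have key : ∀ s m t : ℝ, a < s → s < m → m < t → (t : EReal) < b →
        (ψ m - ψ s) * (rieszKernel p t - rieszKernel p s) =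
          (ψ t - ψ s) * (rieszKernel p m - rieszKernel p s) := fun s m t hs hsm hmt ht =>
      chord_eq hn hF hchar ha h hs ht hsm hmt (hψ' s m hs hsm.le (hI m t hmt.le ht))
        (hψ' m t (hs.trans hsm) hmt.le ht)
    have hk := rieszKernel_strictMono p (show t1 ∈ Ioi 0 from lt_of_le_of_lt ha ht1a)
      (show t2 ∈ Ioi 0 from lt_of_le_of_lt ha ht2a) ht12
    have hk12 : 0 < rieszKernel p t2 - rieszKernel p t1 := by linarith
    have hle := hψ' t1 t2 ht1a ht12.le ht2b
    refine ⟨(ψ t2 - ψ t1) / (rieszKernel p t2 - rieszKernel p t1),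
      ψ t1 - (ψ t2 - ψ t1) / (rieszKernel p t2 - rieszKernel p t1) * rieszKernel p t1,
      div_nonneg (by linarith) hk12.le, ?_⟩
    intro t hta htb
    have goal : (ψ t - ψ t1) * (rieszKernel p t2 - rieszKernel p t1) =
        (ψ t2 - ψ t1) * (rieszKernel p t - rieszKernel p t1) := by
      rcases lt_trichotomy t t1 with h1 | h1 | h1
      · have := key t t1 t2 hta h1 ht12 ht2b
        linarith
      · rw [h1]; ring
      · rcases lt_trichotomy t t2 with h2 | h2 | h2
        · exact key t1 t t2 ht1a h1 h2 ht2b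
        · rw [h2]
        · have := key t1 t2 t ht1a ht12 h2 htb
          linarith
    field_simp
    linarith
  · rintro ⟨Θ, C, hΘ, hC⟩
    exact quad_harm hF hchar ha hΘ hC

end
end

section
/- Let n ≥ 2 and let F ⊆ Sym²(ℝⁿ) be an ST-invariant cone subequation with finite increasing Riesz characteristic p (i.e. P_{e⊥} − (p−1)P_e ∈ ∂F for unit e) and finite decreasing Riesz characteristic q (i.e. −P_{e⊥} + (q−1)P_e ∈ ∂F for unit e). Then (p−1)(q−1) ≥ 1. -/
open Set Filter Topology Matrix

noncomputable section

theorem psd_aux {n : ℕ} (E : Matrix (Fin n) (Fin n) ℝ) (hE : E.IsSymm) (d : Fin n → ℝ) (ε : ℝ)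
    (hd : ∀ i, n * ε ≤ d i)
    (h : ∀ i j, |E i j - Matrix.diagonal d i j| ≤ ε) : E.PosSemidef := by
  refine Matrix.PosSemidef.of_dotProduct_mulVec_nonneg ?_ ?_
  · ext i j
    simpa using congrFun (congrFun hE i) j
  intro x
  have key : ∀ i j, x i * x j * Matrix.diagonal d i j - ε * (x i ^ 2 + x j ^ 2) / 2
      ≤ x i * (E i j * x j) := by
    intro i j
    have h1 := abs_le.1 (h i j)
    obtain ⟨h1, h2⟩ := h1
    nlinarith [mul_nonneg (sub_nonneg.2 h2) (sq_nonneg (x i - x j)),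
      mul_nonneg (by linarith : 0 ≤ ε + (E i j - Matrix.diagonal d i j)) (sq_nonneg (x i + x j))]
  have hs := Finset.sum_le_sum (s := Finset.univ) fun i _ =>
    Finset.sum_le_sum (s := Finset.univ) fun j _ => key i j
  have e1 : star x ⬝ᵥ (E *ᵥ x) = ∑ i, ∑ j, x i * (E i j * x j) := by
    simp [dotProduct, Matrix.mulVec, Finset.mul_sum]
  have e2 : ∑ i, ∑ j, (x i * x j * Matrix.diagonal d i j - ε * (x i ^ 2 + x j ^ 2) / 2)
      = ∑ i, x i ^ 2 * (d i - n * ε) := by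
    have a1 : ∀ i j, ε * (x i ^ 2 + x j ^ 2) / 2 = ε / 2 * x i ^ 2 + ε / 2 * x j ^ 2 := by
      intros; ring
    simp only [Finset.sum_sub_distrib, a1, Finset.sum_add_distrib, Matrix.diagonal_apply,
      mul_ite, mul_zero, Finset.sum_ite_eq, Finset.mem_univ, if_true, Finset.sum_const,
      Finset.card_univ, Fintype.card_fin, nsmul_eq_mul, mul_sub, ← Finset.mul_sum]
    have a2 : ∑ i, x i ^ 2 * (n * ε) = n * ε * ∑ i, x i ^ 2 := by
      rw [Finset.mul_sum]; exact Finset.sum_congr rfl fun i _ => by ring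
    rw [a2]
    have a3 : ∑ i, x i * x i * d i = ∑ i, x i ^ 2 * d i :=
      Finset.sum_congr rfl fun i _ => by ring
    rw [a3]; ring
  rw [e1]
  refine le_trans ?_ hs
  rw [e2]
  exact Finset.sum_nonneg fun i _ => mul_nonneg (sq_nonneg _) (by linarith [hd i])

/-- The two Riesz characteristics of an ST-invariant cone subequation satisfy
`(p−1)(q−1) ≥ 1`. -/
theorem stmt5 (n : ℕ) (hn : 2 ≤ n) (p q : ℝ)
    (F : Set (Matrix (Fin n) (Fin n) ℝ))
    (hF : IsConeSubequation F) (hST : STInvariant F)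
    (hp : HasRieszChar F p) (hq : HasDualRieszChar F q) :
    1 ≤ (p - 1) * (q - 1) := by
  by_contra hlt
  push Not at hlt
  obtain ⟨hp1, hpe⟩ := hp
  obtain ⟨hq1, hqe⟩ := hq
  obtain ⟨⟨hsym, hcl, hpos⟩, hcone⟩ := hF
  obtain ⟨t, ht1, ht2⟩ : ∃ t : ℝ, p - 1 < t ∧ t * (q - 1) < 1 := by
    refine ⟨p - 1 + (1 - (p - 1) * (q - 1)) / q, ?_, ?_⟩
    · have : 0 < (1 - (p - 1) * (q - 1)) / q := div_pos (by linarith) (by linarith)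
      linarith
    · have hq0 : 0 < q := by linarith
      have : (1 - (p - 1) * (q - 1)) / q * q = 1 - (p - 1) * (q - 1) := by field_simp
      have : 0 < (1 - (p - 1) * (q - 1)) / q := div_pos (by linarith) (by linarith)
      nlinarith
  have ht0 : 0 ≤ t := by linarith
  let i0 : Fin n := ⟨0, by omega⟩
  let i1 : Fin n := ⟨1, by omega⟩
  have hne : i0 ≠ i1 := by simp [i0, i1]
  have hproj : ∀ k : Fin n, projMat (EuclideanSpace.single k (1 : ℝ)) =
      Matrix.diagonal (fun i => if i = k then (1 : ℝ) else 0) := by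
    intro k
    ext i j
    by_cases hij : i = j
    · subst hij
      simp [projMat, EuclideanSpace.single_apply]
    · simp only [projMat, Matrix.of_apply, EuclideanSpace.single_apply,
        Matrix.diagonal_apply_ne _ hij]
      by_cases hi : i = k
      · have : j ≠ k := fun h => hij (hi.trans h.symm)
        simp [this]
      · simp [hi]
  have hA := (hpe (EuclideanSpace.single i0 1) (by simp)).2
  have hB := (hqe (EuclideanSpace.single i1 1) (by simp)).1
  rw [hcl.closure_eq] at hB
  rw [hproj] at hA hB
  set A := ((1 : Matrix (Fin n) (Fin n) ℝ) - Matrix.diagonal (fun i => if i = i0 then (1 : ℝ) else 0))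
    - (p - 1) • Matrix.diagonal (fun i => if i = i0 then (1 : ℝ) else 0) with hAdef
  set B := -((1 : Matrix (Fin n) (Fin n) ℝ) - Matrix.diagonal (fun i => if i = i1 then (1 : ℝ) else 0))
    + (q - 1) • Matrix.diagonal (fun i => if i = i1 then (1 : ℝ) else 0) with hBdef
  have htB := hcone B hB t ht0
  let d : Fin n → ℝ := fun i => if i = i0 then t - (p - 1) else if i = i1 then 1 - t * (q - 1)
    else 1 + t
  have hAd : A - t • B = Matrix.diagonal d := by
    ext i j
    by_cases hij : i = j
    · subst hij
      simp only [hAdef, hBdef, d, Matrix.sub_apply, Matrix.add_apply, Matrix.neg_apply,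
        Matrix.smul_apply, Matrix.one_apply_eq, Matrix.diagonal_apply_eq, smul_eq_mul]
      by_cases h0 : i = i0
      · have : i ≠ i1 := h0 ▸ hne
        simp only [h0, hne, if_true, if_false]; ring
      · by_cases h1 : i = i1
        · simp only [h1, hne.symm, if_true, if_false]; ring
        · simp only [h0, h1, if_false]; ring
    · simp [hAdef, hBdef, Matrix.one_apply_ne hij, Matrix.diagonal_apply_ne _ hij]
  obtain ⟨c, hc0, hc⟩ : ∃ c : ℝ, 0 < c ∧ ∀ i, c ≤ d i := by
    refine ⟨min (t - (p - 1)) (min (1 - t * (q - 1)) 1),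
      lt_min (by linarith) (lt_min (by linarith) one_pos), ?_⟩
    intro i
    simp only [d]
    split_ifs
    · exact min_le_left _ _
    · exact (min_le_right _ _).trans (min_le_left _ _)
    · exact ((min_le_right _ _).trans (min_le_right _ _)).trans (by linarith)
  have hn0 : (0 : ℝ) < n := by exact_mod_cast (by omega : 0 < n)
  have hε : 0 < c / n := div_pos hc0 hn0
  refine hA ⟨{C | ∀ i j, |C i j - A i j| < c / n}, ?_, ?_⟩
  · have : IsOpen {C : Matrix (Fin n) (Fin n) ℝ | ∀ i j, |C i j - A i j| < c / n} := by
      simp only [Set.setOf_forall]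
      refine isOpen_iInter_of_finite fun i => isOpen_iInter_of_finite fun j => ?_
      refine isOpen_lt ?_ continuous_const
      exact ((continuous_id.matrix_elem i j).sub continuous_const).abs
    exact this.mem_nhds (fun i j => by simpa using hε)
  · intro C hC hCs
    have hpsd : (C - t • B).PosSemidef := by
      refine psd_aux _ (hCs.sub (hsym _ htB)) d (c / n) ?_ ?_
      · intro i
        rw [mul_div_cancel₀ _ hn0.ne']
        exact hc i
      · intro i j
        have := hC i j
        rw [← hAd]
        simp only [Matrix.sub_apply]
        rw [sub_sub_sub_cancel_right]
        exact this.le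
    have := hpos _ htB _ hpsd
    rwa [add_sub_cancel] at this

end
end
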